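/- arXiv:2508.10708 — 5 statements merged into one kernel-verified Lean document; each statement's English description precedes it below -/
import Mathlib

section
/- For every n ≥ 1 one has the Cholesky-type factorization A_n = − F_nᵀ F_n, where F_n and A_n are the recursively defined lower unitriangular and symmetric matrices associated with a sequence of n blow-ups. -/
open Matrix

/-- The Cholesky-type lower unitriangular matrix `F_n` associated with a sequence of
blow-ups, defined recursively by `F_1 = (1)` and `F_k = [[F_{k-1}, 0], [-e_k, 1]]`.
Here `Fmat e n` is the matrix of size `(n+1) × (n+1)`, i.e. `F_{n+1}`. -/
def Fmat (e : (k : ℕ) → Fin k → ℤ) : (n : ℕ) → Matrix (Fin (n + 1)) (Fin (n + 1)) ℤ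
  | 0 => 1
  | n + 1 => Matrix.of fun i j =>
      if hi : (i : ℕ) < n + 1 then
        if hj : (j : ℕ) < n + 1 then Fmat e n ⟨i, hi⟩ ⟨j, hj⟩ else 0
      else
        if hj : (j : ℕ) < n + 1 then - e (n + 1) ⟨j, hj⟩ else 1

/-- The self-intersection matrix `A_n` of the exceptional divisor, defined recursively by
`A_1 = (-1)` and `A_k = [[A_{k-1} - e_kᵀ e_k, e_kᵀ], [e_k, -1]]`.
Here `Amat e n` is the matrix of size `(n+1) × (n+1)`, i.e. `A_{n+1}`. -/
def Amat (e : (k : ℕ) → Fin k → ℤ) : (n : ℕ) → Matrix (Fin (n + 1)) (Fin (n + 1)) ℤ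
  | 0 => Matrix.of fun _ _ => -1
  | n + 1 => Matrix.of fun i j =>
      if hi : (i : ℕ) < n + 1 then
        if hj : (j : ℕ) < n + 1 then
          Amat e n ⟨i, hi⟩ ⟨j, hj⟩ - e (n + 1) ⟨i, hi⟩ * e (n + 1) ⟨j, hj⟩
        else e (n + 1) ⟨i, hi⟩
      else
        if hj : (j : ℕ) < n + 1 then e (n + 1) ⟨j, hj⟩ else -1

/-- Bordering `F` below by `(-E, 1)` changes `-FᵀF` exactly as a blow-up changes the
self-intersection matrix. -/
theorem neg_transpose_mul_self_fromBlocks {R m n o : Type*} [NonAssocRing R] [Fintype m]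
    [Fintype o] [DecidableEq o] (F : Matrix m n R) (E : Matrix o n R) :
    -((fromBlocks F 0 (-E) 1)ᵀ * fromBlocks F 0 (-E) 1) =
      fromBlocks (-(Fᵀ * F) - Eᵀ * E) Eᵀ E (-1) := by
  simp [fromBlocks_transpose, fromBlocks_multiply, fromBlocks_neg, sub_eq_add_neg, add_comm]

theorem neg_transpose_mul_self_reindex {R l m n o : Type*} [NonUnitalNonAssocRing R] [Fintype l]
    [Fintype m] (f : m ≃ l) (g : n ≃ o) (B : Matrix m n R) :
    -((reindex f g B)ᵀ * reindex f g B) = reindex g g (-(Bᵀ * B)) := by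
  simp only [reindex_apply, transpose_submatrix, submatrix_mul_equiv, submatrix_neg, Pi.neg_apply]

theorem Fmat_succ (e : (k : ℕ) → Fin k → ℤ) (n : ℕ) :
    Fmat e (n + 1) =
      reindex finSumFinEquiv finSumFinEquiv
        (fromBlocks (Fmat e n) 0 (-replicateRow (Fin 1) (e (n + 1))) 1) := by
  rw [← Equiv.symm_apply_eq]
  ext (i | i) (j | j) <;> simp [Fmat, Fin.is_le, Fin.fin_one_eq_zero]

theorem Amat_succ (e : (k : ℕ) → Fin k → ℤ) (n : ℕ) :
    Amat e (n + 1) =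
      reindex finSumFinEquiv finSumFinEquiv
        (fromBlocks
          (Amat e n - (replicateRow (Fin 1) (e (n + 1)))ᵀ * replicateRow (Fin 1) (e (n + 1)))
          (replicateRow (Fin 1) (e (n + 1)))ᵀ
          (replicateRow (Fin 1) (e (n + 1)))
          (-1)) := by
  rw [← Equiv.symm_apply_eq]
  ext (i | i) (j | j) <;> simp [Amat, mul_apply, Fin.is_le, Fin.fin_one_eq_zero]

/-- **Cholesky-type factorization**: for every `n ≥ 1`, `A_n = − F_nᵀ F_n`. -/
theorem cholesky_factorization (e : (k : ℕ) → Fin k → ℤ) (n : ℕ) :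
    Amat e n = -((Fmat e n)ᵀ * Fmat e n) := by
  induction n with
  | zero =>
    ext i j
    simp [Amat, Fmat, Fin.fin_one_eq_zero]
  | succ n ih =>
    rw [Amat_succ, Fmat_succ, neg_transpose_mul_self_reindex, neg_transpose_mul_self_fromBlocks, ih]
end

section
/- Assume in addition that every entry of each vector e_k lies in {0,1}. Then F_nᵀ u = 2u + α, where u is the all-ones column vector and α = ((A_n)_{11}, …, (A_n)_{nn})ᵀ is the vector of diagonal entries of A_n; equivalently, (F_nᵀ u)_i = 2 + (A_n)_{ii} for every i. -/
open Matrix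

/-!
The recursion for `A_n` is a block form of the Cholesky-type factorization `A_n = -F_nᵀ F_n`, so
`-(A_n)_{ii}` is the sum of the squares of the entries in column `i` of `F_n`, while `(F_nᵀ u)_i` is
the sum of the entries themselves. In the total of both sums the diagonal entry `1` of `F_n`
contributes `2`; an off-diagonal entry is `0` or `-1`, so it cancels against its square.
-/

section UnitDiagonal

variable {m R : Type*} [Fintype m] [NonAssocRing R]

theorem transpose_mulVec_one_apply_eq_two_sub {F : Matrix m m R} {i : m} (hdiag : F i i = 1)
    (hoff : ∀ k ≠ i, F k i * F k i = -F k i) :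
    (Fᵀ *ᵥ 1) i = 2 - (Fᵀ * F) i i := by
  have hsum : ∑ k, (F k i + F k i * F k i) = 2 := by
    rw [Fintype.sum_eq_single i fun k hk ↦ by rw [hoff k hk, add_neg_cancel], hdiag, one_mul,
      one_add_one_eq_two]
  rw [eq_sub_iff_add_eq, ← hsum, Finset.sum_add_distrib]
  simp only [mulVec, dotProduct, mul_apply, transpose_apply, Pi.one_apply, mul_one]

end UnitDiagonal

section Factorization

variable (e : (k : ℕ) → Fin k → ℤ) (n : ℕ)

@[simp]
theorem Fmat_succ_castSucc_castSucc (i j : Fin (n + 1)) :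
    Fmat e (n + 1) i.castSucc j.castSucc = Fmat e n i j := by
  simp [Fmat, Fin.is_le]

@[simp]
theorem Fmat_succ_castSucc_last (i : Fin (n + 1)) :
    Fmat e (n + 1) i.castSucc (Fin.last (n + 1)) = 0 := by
  simp [Fmat, Fin.is_le]

@[simp]
theorem Fmat_succ_last_castSucc (j : Fin (n + 1)) :
    Fmat e (n + 1) (Fin.last (n + 1)) j.castSucc = -e (n + 1) j := by
  simp [Fmat, Fin.is_le]

@[simp]
theorem Fmat_succ_last_last : Fmat e (n + 1) (Fin.last (n + 1)) (Fin.last (n + 1)) = 1 := by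
  simp [Fmat]

@[simp]
theorem Amat_succ_castSucc_castSucc (i j : Fin (n + 1)) :
    Amat e (n + 1) i.castSucc j.castSucc = Amat e n i j - e (n + 1) i * e (n + 1) j := by
  simp [Amat, Fin.is_le]

@[simp]
theorem Amat_succ_castSucc_last (i : Fin (n + 1)) :
    Amat e (n + 1) i.castSucc (Fin.last (n + 1)) = e (n + 1) i := by
  simp [Amat, Fin.is_le]

@[simp]
theorem Amat_succ_last_castSucc (j : Fin (n + 1)) :
    Amat e (n + 1) (Fin.last (n + 1)) j.castSucc = e (n + 1) j := by
  simp [Amat, Fin.is_le]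

@[simp]
theorem Amat_succ_last_last : Amat e (n + 1) (Fin.last (n + 1)) (Fin.last (n + 1)) = -1 := by
  simp [Amat]

theorem Fmat_apply_self (i : Fin (n + 1)) : Fmat e n i i = 1 := by
  induction n with
  | zero => rw [Fmat, one_apply_eq]
  | succ n ih =>
    cases i using Fin.lastCases with
    | last => exact Fmat_succ_last_last e n
    | cast i => rw [Fmat_succ_castSucc_castSucc, ih]

theorem Fmat_apply_of_lt {i j : Fin (n + 1)} (hij : i < j) : Fmat e n i j = 0 := by
  induction n with
  | zero => exact absurd (Fin.subsingleton_one.elim i j) hij.ne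
  | succ n ih =>
    cases j using Fin.lastCases with
    | last =>
      obtain ⟨i, rfl⟩ := Fin.exists_castSucc_eq.2 hij.ne
      exact Fmat_succ_castSucc_last e n i
    | cast j =>
      obtain ⟨i, rfl⟩ := Fin.exists_castSucc_eq.2 (hij.trans j.castSucc_lt_last).ne
      rw [Fmat_succ_castSucc_castSucc, ih (Fin.castSucc_lt_castSucc_iff.1 hij)]

theorem Fmat_apply_of_gt {i j : Fin (n + 1)} (hji : j < i) : Fmat e n i j = -e i ⟨j, hji⟩ := by
  induction n with
  | zero => exact absurd (Fin.subsingleton_one.elim j i) hji.ne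
  | succ n ih =>
    obtain ⟨j, rfl⟩ := Fin.exists_castSucc_eq.2 (hji.trans_le i.le_last).ne
    cases i using Fin.lastCases with
    | last => exact Fmat_succ_last_castSucc e n j
    | cast i => exact (Fmat_succ_castSucc_castSucc e n i j).trans (ih hji)

theorem Amat_eq_neg_transpose_mul_Fmat : Amat e n = -((Fmat e n)ᵀ * Fmat e n) := by
  induction n with
  | zero =>
    ext i j
    simp [Amat, Fmat, Fin.subsingleton_one.elim i j]
  | succ n ih =>
    ext i j
    cases i using Fin.lastCases <;> cases j using Fin.lastCases <;>
      simp [ih, mul_apply, Fin.sum_univ_castSucc, sub_eq_neg_add, add_comm]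

end Factorization

/-- If every entry of each vector `e_k` lies in `{0,1}`, then `F_nᵀ u = 2u + diag(A_n)`,
i.e. `(F_nᵀ u)_i = 2 + (A_n)_{ii}` for every `i`, where `u` is the all-ones vector. -/
theorem transpose_mulVec_ones (e : (k : ℕ) → Fin k → ℤ) (n : ℕ)
    (h01 : ∀ k, k ≤ n → ∀ i : Fin k, e k i = 0 ∨ e k i = 1) :
    ∀ i, ((Fmat e n)ᵀ *ᵥ (fun _ => 1)) i = 2 + Amat e n i i := by
  intro i
  have hoff : ∀ k ≠ i, Fmat e n k i * Fmat e n k i = -Fmat e n k i := by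
    intro k hk
    rcases hk.lt_or_gt with hlt | hgt
    · rw [Fmat_apply_of_lt e n hlt, mul_zero, neg_zero]
    · rw [Fmat_apply_of_gt e n hgt]
      rcases h01 k k.is_le ⟨i, hgt⟩ with h | h <;> rw [h] <;> rfl
  rw [Amat_eq_neg_transpose_mul_Fmat, neg_apply, ← sub_eq_add_neg]
  exact transpose_mulVec_one_apply_eq_two_sub (Fmat_apply_self e n i) hoff
end

section
/- Let F be an invertible n×n rational matrix, set A := −FᵀF, let u ∈ ℚⁿ be the all-ones vector, and assume (Fᵀu)_i = 2 + A_{ii} for all i. Let δ ∈ {0,1}ⁿ, set ι := u − δ, and let S ∈ ℤⁿ satisfy: (i) δ_i · ( S_i − 2 + (Au)_i − A_{ii} ) = 0 for every i (balanced condition); (ii) A_{ij} = 0 for all i ≠ j with δ_i = δ_j = 1 (no two dicritical components meet); (iii) Σ_{1 ≤ i < j ≤ n} A_{ij} = n − 1 (the dual graph is a tree). Then 2⟨S, δ⟩ − ⟨Aι, F⁻¹u⟩ − 2⟨δ, u⟩ − ⟨ι, Aι⟩ = 2. -/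
open Matrix

/-!
Write `e` for the sum of the entries of `A` above the diagonal, which counts the edges of the dual
graph. The idea is that the left-hand side reduces to `2 * (n - e)` for any graph: the inverse
disappears because `A F⁻¹ = -Fᵀ`, and expanding `⟨ι, Aι⟩` leaves only sums over the diagonal of
`A`, the number `e`, and the cross term `⟨δ, Au⟩`, which the balanced condition cancels. The value
`2` is therefore twice the Euler characteristic of a tree.
-/

section

variable {m R : Type*} [Fintype m]

theorem one_dotProduct_mulVec_one_of_isSymm [LinearOrder m] [LocallyFiniteOrderTop m]
    [LocallyFiniteOrderBot m] [NonAssocSemiring R] {A : Matrix m m R} (hA : A.IsSymm) :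
    1 ⬝ᵥ A *ᵥ 1 = A.trace + 2 * ∑ i, ∑ j ∈ Finset.Ioi i, A i j := by
  have off_diag : ∑ i, ∑ j ∈ {i}ᶜ, A i j = 2 * ∑ i, ∑ j ∈ Finset.Ioi i, A i j := by
    simp_rw [← Finset.sum_sum_Ioi_add_eq_sum_sum_off_diag fun i j => A j i, hA.apply, ← two_mul,
      ← Finset.mul_sum]
  calc 1 ⬝ᵥ A *ᵥ 1 = ∑ i, (A i i + ∑ j ∈ {i}ᶜ, A i j) := by
        simp_rw [one_dotProduct, mulVec, dotProduct_one, ← Fintype.sum_eq_add_sum_compl]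
    _ = A.trace + 2 * ∑ i, ∑ j ∈ Finset.Ioi i, A i j := by
        rw [Finset.sum_add_distrib, off_diag, trace]
        rfl

theorem dotProduct_mulVec_self_eq_dotProduct_diag [NonAssocSemiring R] {A : Matrix m m R}
    {δ : m → R} (hδ : ∀ i, δ i = 0 ∨ δ i = 1)
    (hA : ∀ i j, i ≠ j → δ i = 1 → δ j = 1 → A i j = 0) :
    δ ⬝ᵥ A *ᵥ δ = δ ⬝ᵥ A.diag := by
  refine Finset.sum_congr rfl fun i _ => ?_
  rcases hδ i with hi | hi
  · simp [hi]
  · have off_diag (j : m) (hji : j ≠ i) : A i j * δ j = 0 := by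
      rcases hδ j with hj | hj
      · rw [hj, mul_zero]
      · rw [hA i j hji.symm hi hj, zero_mul]
    rw [mulVec, dotProduct, Fintype.sum_eq_single i off_diag, hi, mul_one, diag_apply]

theorem sub_dotProduct_mulVec_sub_of_isSymm [CommRing R] {A : Matrix m m R} (hA : A.IsSymm)
    (v w : m → R) :
    (v - w) ⬝ᵥ A *ᵥ (v - w) = v ⬝ᵥ A *ᵥ v - 2 * (w ⬝ᵥ A *ᵥ v) + w ⬝ᵥ A *ᵥ w := by
  have comm : v ⬝ᵥ A *ᵥ w = w ⬝ᵥ A *ᵥ v := by rw [← dotProduct_transpose_mulVec, hA.eq]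
  rw [mulVec_sub, sub_dotProduct, dotProduct_sub, dotProduct_sub, comm]
  ring

theorem transpose_mul_self_mulVec_dotProduct_inv_mulVec [DecidableEq m] [CommRing R]
    {F : Matrix m m R} (hF : IsUnit F.det) (v w : m → R) :
    ((Fᵀ * F) *ᵥ v) ⬝ᵥ (F⁻¹ *ᵥ w) = v ⬝ᵥ Fᵀ *ᵥ w := by
  rw [dotProduct_comm, ← dotProduct_transpose_mulVec, (isSymm_transpose_mul_self F).eq,
    mulVec_mulVec, Matrix.mul_assoc, mul_nonsing_inv F hF, Matrix.mul_one]

theorem dotProduct_eq_of_balanced [CommRing R] {A : Matrix m m R} {S δ : m → R}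
    (hbal : ∀ i, δ i * (S i - 2 + (A *ᵥ 1) i - A i i) = 0) :
    S ⬝ᵥ δ = 2 * (δ ⬝ᵥ 1) - δ ⬝ᵥ A *ᵥ 1 + δ ⬝ᵥ A.diag := by
  simp only [dotProduct, Finset.mul_sum, ← Finset.sum_sub_distrib, ← Finset.sum_add_distrib]
  refine Finset.sum_congr rfl fun i _ => ?_
  rw [Pi.one_apply, diag_apply]
  linear_combination hbal i

theorem beta_eq_two_general [LinearOrder m] [LocallyFiniteOrderTop m] [LocallyFiniteOrderBot m]
    [CommRing R] {F A : Matrix m m R} (hF : IsUnit F.det) (hA : A = -(Fᵀ * F))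
    (hFu : Fᵀ *ᵥ 1 = (2 : R) • 1 + A.diag)
    {δ ι S : m → R} (hδ : ∀ i, δ i = 0 ∨ δ i = 1) (hι : ι = 1 - δ)
    (hbal : ∀ i, δ i * (S i - 2 + (A *ᵥ 1) i - A i i) = 0)
    (hdic : ∀ i j, i ≠ j → δ i = 1 → δ j = 1 → A i j = 0) :
    2 * (S ⬝ᵥ δ) - (A *ᵥ ι) ⬝ᵥ (F⁻¹ *ᵥ 1) - 2 * (δ ⬝ᵥ 1) - ι ⬝ᵥ A *ᵥ ι
      = 2 * (Fintype.card m - ∑ i, ∑ j ∈ Finset.Ioi i, A i j) := by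
  have hsymm : A.IsSymm := hA ▸ (isSymm_transpose_mul_self F).neg
  have hcross : (A *ᵥ ι) ⬝ᵥ (F⁻¹ *ᵥ 1)
      = -(2 * (Fintype.card m - δ ⬝ᵥ 1) + (A.trace - δ ⬝ᵥ A.diag)) := by
    have trace_eq : 1 ⬝ᵥ A.diag = A.trace := one_dotProduct _
    rw [hA, neg_mulVec, neg_dotProduct, transpose_mul_self_mulVec_dotProduct_inv_mulVec hF, hFu,
      ← hA, hι, dotProduct_add, dotProduct_smul, sub_dotProduct, sub_dotProduct, one_dotProduct_one,
      trace_eq, smul_eq_mul]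
  have hquad : ι ⬝ᵥ A *ᵥ ι = A.trace + 2 * ∑ i, ∑ j ∈ Finset.Ioi i, A i j
      - 2 * (δ ⬝ᵥ A *ᵥ 1) + δ ⬝ᵥ A.diag := by
    rw [hι, sub_dotProduct_mulVec_sub_of_isSymm hsymm, one_dotProduct_mulVec_one_of_isSymm hsymm,
      dotProduct_mulVec_self_eq_dotProduct_diag hδ hdic]
  rw [dotProduct_eq_of_balanced hbal, hcross, hquad]
  ring

end

/-- **The identity β = 2**: with `A = −FᵀF`, `Fᵀu = 2u + diag A`, `δ ∈ {0,1}ⁿ`,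
`ι = u − δ`, `S ∈ ℤⁿ` balanced, no two dicritical components meeting, and the dual
graph a tree, one has `2⟨S,δ⟩ − ⟨Aι, F⁻¹u⟩ − 2⟨δ,u⟩ − ⟨ι,Aι⟩ = 2`. -/
theorem beta_eq_two (n : ℕ) (F : Matrix (Fin n) (Fin n) ℚ) (hF : IsUnit F.det)
    (A : Matrix (Fin n) (Fin n) ℚ) (hA : A = -(Fᵀ * F))
    (hFu : ∀ i, (Fᵀ *ᵥ (fun _ => 1)) i = 2 + A i i)
    (δ : Fin n → ℚ) (hδ : ∀ i, δ i = 0 ∨ δ i = 1)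
    (ι : Fin n → ℚ) (hι : ι = (fun _ => 1) - δ)
    (S : Fin n → ℚ) (hSint : ∀ i, ∃ m : ℤ, S i = m)
    (hbal : ∀ i, δ i * (S i - 2 + (A *ᵥ (fun _ => 1)) i - A i i) = 0)
    (hdic : ∀ i j, i ≠ j → δ i = 1 → δ j = 1 → A i j = 0)
    (htree : ∑ i, ∑ j ∈ Finset.univ.filter (fun j => i < j), A i j = (n : ℚ) - 1) :
    2 * (S ⬝ᵥ δ) - (A *ᵥ ι) ⬝ᵥ (F⁻¹ *ᵥ (fun _ => 1)) - 2 * (δ ⬝ᵥ (fun _ => 1))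
      - ι ⬝ᵥ (A *ᵥ ι) = 2 := by
  simp_rw [Finset.filter_lt_eq_Ioi] at htree
  have hFu_diag : Fᵀ *ᵥ 1 = (2 : ℚ) • 1 + A.diag := funext fun i => (hFu i).trans (by simp)
  calc _ = 2 * ((Fintype.card (Fin n) : ℚ) - ∑ i, ∑ j ∈ Finset.Ioi i, A i j) :=
        beta_eq_two_general hF hA hFu_diag hδ hι hbal hdic
    _ = 2 := by rw [htree, Fintype.card_fin]; ring
end

section
/- Let F be an invertible n×n rational matrix, set A := −FᵀF, let u be the all-ones vector, and assume (Fᵀu)_i = 2 + A_{ii} for all i. Let δ ∈ {0,1}ⁿ, set ι := u − δ, and let S ∈ ℤⁿ satisfy: (i) δ_i · ( S_i − 2 + (Au)_i − A_{ii} ) = 0 for every i; (ii) A_{ij} = 0 for all i ≠ j with δ_i = δ_j = 1; (iii) Σ_{1 ≤ i < j ≤ n} A_{ij} = n − 1. Define ℓ := (F⁻¹)ᵀ S − F ι. Then ⟨S, u⟩ − 2⟨δ, u⟩ + ⟨ℓ, ℓ⟩ − ⟨ℓ, u⟩ − 1 = ⟨−A⁻¹ S, S⟩ − ⟨S, (I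 + F⁻¹) u⟩ + 1. -/
open Matrix

/-!
Since `F⁻¹(F⁻¹)ᵀ = −A⁻¹` and `⟨(F⁻¹)ᵀS, Fι⟩ = ⟨S, ι⟩`, expanding `ℓ = (F⁻¹)ᵀS − Fι` removes `F`
from the left-hand side, except in the terms `⟨−A⁻¹S, S⟩` and `⟨S, F⁻¹u⟩` that already occur on
the right. What remains is an identity in the dual graph: deleting from a tree the pairwise
non-adjacent vertices marked by `δ` lowers the Euler characteristic by one and raises it by the
valence for each of them, and the balanced condition expresses these valences through `S`.
-/

section BilinearForm

variable {n R : Type*} [Fintype n]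

theorem sum_sum_eq_trace_add_two_nsmul_sum_lt [LinearOrder n] [AddCommMonoid R]
    {A : Matrix n n R} (hA : A.IsSymm) :
    ∑ i, ∑ j, A i j = A.trace + 2 • ∑ i, ∑ j with i < j, A i j := by
  let _ : LocallyFiniteOrderTop n := .ofIci n (fun i => {j | i ≤ j}) (by simp)
  let _ : LocallyFiniteOrderBot n := .ofIic n (fun i => {j | j ≤ i}) (by simp)
  have hoff : ∑ i, ∑ j ∈ {i}ᶜ, A i j = 2 • ∑ i, ∑ j with i < j, A i j := by
    simpa only [hA.apply, ← two_nsmul, ← Finset.smul_sum, Finset.filter_lt_eq_Ioi] using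
      (Finset.sum_sum_Ioi_add_eq_sum_sum_off_diag fun j i => A i j).symm
  calc ∑ i, ∑ j, A i j = ∑ i, (A i i + ∑ j ∈ {i}ᶜ, A i j) :=
        Finset.sum_congr rfl fun i _ => Fintype.sum_eq_add_sum_compl i (A i)
    _ = A.trace + 2 • ∑ i, ∑ j with i < j, A i j := by
        rw [Finset.sum_add_distrib, hoff]
        rfl

theorem dotProduct_mulVec_self_of_zero_one [NonAssocSemiring R] {A : Matrix n n R} {δ : n → R}
    (hδ : ∀ i, δ i = 0 ∨ δ i = 1) (hA : ∀ i j, i ≠ j → δ i = 1 → δ j = 1 → A i j = 0) :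
    δ ⬝ᵥ (A *ᵥ δ) = δ ⬝ᵥ A.diag := by
  refine Finset.sum_congr rfl fun i _ => ?_
  rcases hδ i with hi | hi
  · rw [hi, zero_mul, zero_mul]
  · have hoff : ∀ j ≠ i, A i j * δ j = 0 := fun j hji => by
      rcases hδ j with hj | hj
      · rw [hj, mul_zero]
      · rw [hA i j hji.symm hi hj, zero_mul]
    rw [mulVec, dotProduct, Fintype.sum_eq_single i hoff, hi, mul_one, diag_apply]

variable [CommRing R] {A : Matrix n n R} {δ : n → R}

theorem one_sub_dotProduct_mulVec_one_sub_of_zero_one (hA : A.IsSymm)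
    (hδ : ∀ i, δ i = 0 ∨ δ i = 1) (hdic : ∀ i j, i ≠ j → δ i = 1 → δ j = 1 → A i j = 0) :
    (1 - δ) ⬝ᵥ (A *ᵥ (1 - δ)) = 1 ⬝ᵥ (A *ᵥ 1) - 2 * (δ ⬝ᵥ (A *ᵥ 1)) + δ ⬝ᵥ A.diag := by
  have hcross : 1 ⬝ᵥ (A *ᵥ δ) = δ ⬝ᵥ (A *ᵥ 1) := by
    simpa only [hA.eq] using dotProduct_transpose_mulVec A 1 δ
  rw [mulVec_sub, sub_dotProduct, dotProduct_sub, dotProduct_sub, hcross,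
    dotProduct_mulVec_self_of_zero_one hδ hdic]
  ring

-- When `A` is the intersection matrix of a tree of curves, each side is `-2` times the Euler
-- characteristic of the dual graph of the curves with `δ i = 0`.
theorem one_sub_adjunction_of_balanced [LinearOrder n] {S : n → R}
    (hA : A.IsSymm) (hδ : ∀ i, δ i = 0 ∨ δ i = 1)
    (hbal : ∀ i, δ i * (S i - 2 + (A *ᵥ 1) i - A i i) = 0)
    (hdic : ∀ i j, i ≠ j → δ i = 1 → δ j = 1 → A i j = 0)
    (htree : ∑ i, ∑ j with i < j, A i j = (Fintype.card n : R) - 1) :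
    (1 - δ) ⬝ᵥ (A *ᵥ (1 - δ)) - (1 - δ) ⬝ᵥ (2 + A.diag) = 2 * (δ ⬝ᵥ S - δ ⬝ᵥ 1 - 1) := by
  have htotal : 1 ⬝ᵥ (A *ᵥ 1) = A.trace + 2 * ((Fintype.card n : R) - 1) := by
    simpa [one_dotProduct, mulVec, dotProduct_one, htree] using
      sum_sum_eq_trace_add_two_nsmul_sum_lt hA
  have htrace : 1 ⬝ᵥ A.diag = A.trace := one_dotProduct _
  have htwo : (2 : n → R) = (2 : R) • 1 := by ext; simp
  have hbalanced : δ ⬝ᵥ S - 2 * (δ ⬝ᵥ 1) + δ ⬝ᵥ (A *ᵥ 1) - δ ⬝ᵥ A.diag = 0 := by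
    have hsum : δ ⬝ᵥ (S - 2 + A *ᵥ 1 - A.diag) = 0 := Finset.sum_eq_zero fun i _ => hbal i
    simpa only [htwo, dotProduct_sub, dotProduct_add, dotProduct_smul, smul_eq_mul] using hsum
  rw [one_sub_dotProduct_mulVec_one_sub_of_zero_one hA hδ hdic, htotal, htwo]
  simp only [sub_dotProduct, dotProduct_add, dotProduct_smul, smul_eq_mul, one_dotProduct_one,
    htrace]
  linear_combination -2 * hbalanced

end BilinearForm

section Multiplicity

variable {n R : Type*} [Fintype n] [DecidableEq n] [CommRing R] {F : Matrix n n R}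

theorem inv_neg_transpose_mul_self (hF : IsUnit F.det) : (-(Fᵀ * F))⁻¹ = -(F⁻¹ * (F⁻¹)ᵀ) := by
  refine inv_eq_left_inv ?_
  rw [neg_mul_neg, Matrix.mul_assoc, ← Matrix.mul_assoc (F⁻¹)ᵀ, ← transpose_mul,
    mul_nonsing_inv F hF, transpose_one, Matrix.one_mul, nonsing_inv_mul F hF]

/-- The vector `(F⁻¹)ᵀS − Fι`. For `F` the Cholesky matrix of a reduction of singularities, `S` the
intersection vector of a balanced divisor and `ι` the indicator of the non-dicritical components,
its entries are the multiplicities of the pulled-back foliation along the exceptional components. -/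
noncomputable def multiplicityVector (F : Matrix n n R) (S ι : n → R) : n → R :=
  (F⁻¹)ᵀ *ᵥ S - F *ᵥ ι

theorem multiplicityVector_dotProduct (F : Matrix n n R) (S ι v : n → R) :
    multiplicityVector F S ι ⬝ᵥ v = S ⬝ᵥ (F⁻¹ *ᵥ v) - ι ⬝ᵥ (Fᵀ *ᵥ v) := by
  rw [multiplicityVector, sub_dotProduct, mulVec_transpose, ← dotProduct_mulVec,
    dotProduct_transpose_mulVec, dotProduct_comm v]

theorem multiplicityVector_dotProduct_self (hF : IsUnit F.det) (S ι : n → R) :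
    multiplicityVector F S ι ⬝ᵥ multiplicityVector F S ι =
      ((F⁻¹ * (F⁻¹)ᵀ) *ᵥ S) ⬝ᵥ S - 2 * (S ⬝ᵥ ι) + ι ⬝ᵥ ((Fᵀ * F) *ᵥ ι) := by
  have hS : F⁻¹ *ᵥ multiplicityVector F S ι = (F⁻¹ * (F⁻¹)ᵀ) *ᵥ S - ι := by
    rw [multiplicityVector, mulVec_sub, mulVec_mulVec, mulVec_mulVec, nonsing_inv_mul F hF,
      one_mulVec]
  have hι : Fᵀ *ᵥ multiplicityVector F S ι = S - (Fᵀ * F) *ᵥ ι := by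
    rw [multiplicityVector, mulVec_sub, mulVec_mulVec, mulVec_mulVec, ← transpose_mul,
      nonsing_inv_mul F hF, transpose_one, one_mulVec]
  rw [multiplicityVector_dotProduct, hS, hι, dotProduct_sub, dotProduct_sub, dotProduct_comm S,
    dotProduct_comm ι S]
  ring

end Multiplicity

theorem milnor_number_identity_general {n R : Type*} [Fintype n] [LinearOrder n] [CommRing R]
    (F : Matrix n n R) (hF : IsUnit F.det) (A : Matrix n n R) (hA : A = -(Fᵀ * F))
    (hFu : ∀ i, (Fᵀ *ᵥ 1) i = 2 + A i i) (δ : n → R) (hδ : ∀ i, δ i = 0 ∨ δ i = 1)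
    (ι : n → R) (hι : ι = 1 - δ) (S : n → R)
    (hbal : ∀ i, δ i * (S i - 2 + (A *ᵥ 1) i - A i i) = 0)
    (hdic : ∀ i j, i ≠ j → δ i = 1 → δ j = 1 → A i j = 0)
    (htree : ∑ i, ∑ j with i < j, A i j = (Fintype.card n : R) - 1)
    (ℓ : n → R) (hℓ : ℓ = multiplicityVector F S ι) :
    S ⬝ᵥ 1 - 2 * (δ ⬝ᵥ 1) + ℓ ⬝ᵥ ℓ - ℓ ⬝ᵥ 1 - 1 =
      ((-A⁻¹) *ᵥ S) ⬝ᵥ S - S ⬝ᵥ ((1 + F⁻¹) *ᵥ 1) + 1 := by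
  have hsymm : A.IsSymm := hA ▸ (isSymm_transpose_mul_self F).neg
  have hinv : -A⁻¹ = F⁻¹ * (F⁻¹)ᵀ := by rw [hA, inv_neg_transpose_mul_self hF, neg_neg]
  have hgram : Fᵀ * F = -A := by rw [hA, neg_neg]
  have hℓℓ : ℓ ⬝ᵥ ℓ = ((-A⁻¹) *ᵥ S) ⬝ᵥ S - 2 * (S ⬝ᵥ ι) - ι ⬝ᵥ (A *ᵥ ι) := by
    rw [hℓ, multiplicityVector_dotProduct_self hF, hinv, hgram, neg_mulVec, dotProduct_neg,
      ← sub_eq_add_neg]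
  have hℓu : ℓ ⬝ᵥ 1 = S ⬝ᵥ (F⁻¹ *ᵥ 1) - ι ⬝ᵥ (2 + A.diag) := by
    rw [hℓ, multiplicityVector_dotProduct, show Fᵀ *ᵥ 1 = 2 + A.diag from funext hFu]
  have hadj : ι ⬝ᵥ (A *ᵥ ι) - ι ⬝ᵥ (2 + A.diag) = 2 * (δ ⬝ᵥ S - δ ⬝ᵥ 1 - 1) :=
    hι ▸ one_sub_adjunction_of_balanced hsymm hδ hbal hdic htree
  have hSι : S ⬝ᵥ ι = S ⬝ᵥ 1 - δ ⬝ᵥ S := by rw [hι, dotProduct_sub, dotProduct_comm S δ]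
  rw [hℓℓ, hℓu, add_mulVec, one_mulVec, dotProduct_add S]
  linear_combination -2 * hSι - hadj

/-- With `A = −FᵀF`, `Fᵀu = 2u + diag A`, `δ ∈ {0,1}ⁿ`, `ι = u − δ`, `S ∈ ℤⁿ`
satisfying the balanced condition, no two dicritical components meeting, the dual graph
a tree, and `ℓ = (F⁻¹)ᵀS − Fι`, one has
`⟨S,u⟩ − 2⟨δ,u⟩ + ⟨ℓ,ℓ⟩ − ⟨ℓ,u⟩ − 1 = ⟨−A⁻¹S, S⟩ − ⟨S, (I + F⁻¹)u⟩ + 1`. -/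
theorem milnor_number_identity (n : ℕ) (F : Matrix (Fin n) (Fin n) ℚ) (hF : IsUnit F.det)
    (A : Matrix (Fin n) (Fin n) ℚ) (hA : A = -(Fᵀ * F))
    (hFu : ∀ i, (Fᵀ *ᵥ (fun _ => 1)) i = 2 + A i i)
    (δ : Fin n → ℚ) (hδ : ∀ i, δ i = 0 ∨ δ i = 1)
    (ι : Fin n → ℚ) (hι : ι = (fun _ => 1) - δ)
    (S : Fin n → ℚ) (hSint : ∀ i, ∃ m : ℤ, S i = m)
    (hbal : ∀ i, δ i * (S i - 2 + (A *ᵥ (fun _ => 1)) i - A i i) = 0)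
    (hdic : ∀ i j, i ≠ j → δ i = 1 → δ j = 1 → A i j = 0)
    (htree : ∑ i, ∑ j ∈ Finset.univ.filter (fun j => i < j), A i j = (n : ℚ) - 1)
    (ℓ : Fin n → ℚ) (hℓ : ℓ = (F⁻¹)ᵀ *ᵥ S - F *ᵥ ι) :
    S ⬝ᵥ (fun _ => 1) - 2 * (δ ⬝ᵥ (fun _ => 1)) + ℓ ⬝ᵥ ℓ - ℓ ⬝ᵥ (fun _ => 1) - 1 =
      ((-A⁻¹) *ᵥ S) ⬝ᵥ S - S ⬝ᵥ ((1 + F⁻¹) *ᵥ (fun _ => 1)) + 1 :=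
  milnor_number_identity_general F hF A hA hFu δ hδ ι hι S hbal hdic
    (by simpa only [Fintype.card_fin] using htree) ℓ hℓ
end

section
/- Let B be a symmetric bilinear form on ℚⁿ, L a linear form on ℚⁿ, and define M(S) := B(S,S) − L(S) + 1. Let v_1, …, v_r, w ∈ ℚⁿ be vectors such that B(v_i, v_j) = B(v_i, w) = B(w, w) for all 1 ≤ i < j ≤ r and all 1 ≤ i ≤ r. Then M( v_1 + ⋯ + v_r + (2 − r) w ) = M(2w) + Σ_{i=1}^r ( M(v_i) − M(w) ). -/
/-! Put `dᵢ = vᵢ - w`, so that `v₁ + ⋯ + vᵣ + (2 - r)w = 2w + d₁ + ⋯ + dᵣ`. The hypotheses say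
exactly that the `dᵢ` are orthogonal to `w` and to each other. A quadratic function changes under
an orthogonal displacement `d` by an amount that does not depend on the base point, and these
amounts add up over pairwise orthogonal displacements. Hence moving from `2w` by all the `dᵢ` at
once costs the sum of the changes `M(w + dᵢ) - M(w) = M(vᵢ) - M(w)`. -/

section Orthogonality

open QuadraticMap

variable {ι R V N : Type*} [CommRing R] [AddCommGroup V] [Module R V] [AddCommGroup N]
  [Module R N] {Q : QuadraticMap R V N}

theorem isOrtho_sum_right {s : Finset ι} {x : V} {d : ι → V} (h : ∀ i ∈ s, Q.IsOrtho x (d i)) :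
    Q.IsOrtho x (∑ i ∈ s, d i) := by
  simp only [← isOrtho_polarBilin] at h ⊢
  rw [map_sum, Finset.sum_eq_zero h]

theorem map_sum_of_pairwise_isOrtho {s : Finset ι} {d : ι → V}
    (h : (s : Set ι).Pairwise fun i j ↦ Q.IsOrtho (d i) (d j)) :
    Q (∑ i ∈ s, d i) = ∑ i ∈ s, Q (d i) := by
  induction s using Finset.cons_induction with
  | empty => simp
  | cons a s ha ih =>
    have h_head : Q.IsOrtho (d a) (∑ i ∈ s, d i) := isOrtho_sum_right fun i hi ↦
      h (Finset.mem_cons_self a s) (Finset.mem_cons_of_mem hi) (ne_of_mem_of_not_mem hi ha).symm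
    have h_tail : Q (∑ i ∈ s, d i) = ∑ i ∈ s, Q (d i) :=
      ih (h.mono fun _ hi ↦ Finset.mem_cons_of_mem hi)
    rw [Finset.sum_cons, Finset.sum_cons, isOrtho_def.mp h_head, h_tail]

theorem isOrtho_sub_right_iff {x y z : V} :
    Q.IsOrtho x (y - z) ↔ polar Q x y = polar Q x z := by
  rw [← isOrtho_polarBilin, polarBilin_apply_apply, polar_sub_right, sub_eq_zero]

theorem isOrtho_sub_sub {x y w : V} (hxy : polar Q x y = polar Q w w)
    (hxw : polar Q x w = polar Q w w) (hyw : polar Q y w = polar Q w w) :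
    Q.IsOrtho (x - w) (y - w) := by
  rw [isOrtho_sub_right_iff, polar_sub_left, polar_sub_left, hxy, hxw, polar_comm Q w y, hyw]

theorem isOrtho_nsmul_left {x y : V} (h : Q.IsOrtho x y) (k : ℕ) : Q.IsOrtho (k • x) y := by
  rw [← isOrtho_polarBilin] at h ⊢
  rw [map_nsmul, LinearMap.smul_apply, h, smul_zero]

theorem apply_add_of_isOrtho {L : V →ₗ[R] N} {c : N} {M : V → N}
    (hM : ∀ x, M x = Q x - L x + c) {x d : V} (h : Q.IsOrtho x d) :
    M (x + d) = M x + (Q d - L d) := by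
  rw [hM, hM, isOrtho_def.mp h, map_add]
  abel

theorem pairwise_polar_eq_of_lt [LinearOrder ι] {f : V → N} {v : ι → V} {a : N}
    (h : ∀ i j, i < j → polar f (v i) (v j) = a) : Pairwise fun i j ↦ polar f (v i) (v j) = a :=
  have : Std.Symm fun i j ↦ polar f (v i) (v j) = a := ⟨fun _ _ hij ↦ polar_comm f _ _ ▸ hij⟩
  Pairwise.of_lt h

theorem polar_toQuadraticMap_congr {B : LinearMap.BilinMap R V N} (hB : ∀ x y, B x y = B y x)
    {x y x' y' : V} (h : B x y = B x' y') :
    polar B.toQuadraticMap x y = polar B.toQuadraticMap x' y' := by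
  simp only [LinearMap.BilinMap.polar_toQuadraticMap, hB y x, hB y' x', h]

variable (Q) in
theorem quadratic_bifurcation_identity_general [Fintype ι] (L : V →ₗ[R] N) (c : N) (M : V → N)
    (hM : ∀ x, M x = Q x - L x + c) (v : ι → V) (w : V)
    (hvv : Pairwise fun i j ↦ polar Q (v i) (v j) = polar Q w w)
    (hvw : ∀ i, polar Q (v i) w = polar Q w w) :
    M (∑ i, v i + ((2 : R) - Fintype.card ι) • w) = M (2 • w) + ∑ i, (M (v i) - M w) := by
  have hw_ortho (i) : Q.IsOrtho w (v i - w) :=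
    isOrtho_sub_right_iff.mpr ((polar_comm Q w (v i)).trans (hvw i))
  have h_pairwise : Pairwise fun i j ↦ Q.IsOrtho (v i - w) (v j - w) :=
    fun i j hij ↦ isOrtho_sub_sub (hvv hij) (hvw i) (hvw j)
  have h_increment (i) : Q (v i - w) - L (v i - w) = M (v i) - M w := by
    rw [eq_sub_iff_add_eq', ← apply_add_of_isOrtho hM (hw_ortho i), add_sub_cancel]
  calc M (∑ i, v i + ((2 : R) - Fintype.card ι) • w)
      = M (2 • w + ∑ i, (v i - w)) := by
        congr 1
        simp only [Finset.sum_sub_distrib, Finset.sum_const, Finset.card_univ]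
        module
    _ = M (2 • w) + (Q (∑ i, (v i - w)) - L (∑ i, (v i - w))) :=
        apply_add_of_isOrtho hM
          (isOrtho_nsmul_left (isOrtho_sum_right fun i _ ↦ hw_ortho i) 2)
    _ = M (2 • w) + ∑ i, (Q (v i - w) - L (v i - w)) := by
        rw [map_sum_of_pairwise_isOrtho (h_pairwise.set_pairwise _), map_sum,
          Finset.sum_sub_distrib]
    _ = M (2 • w) + ∑ i, (M (v i) - M w) := by simp only [h_increment]

end Orthogonality

/-- The key algebraic identity in the first proof of the Bifurcation Formula: if `B` is a
symmetric bilinear form on `ℚⁿ`, `L` a linear form, `M(S) = B(S,S) − L(S) + 1`, and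
`v_1, …, v_r, w` satisfy `B(v_i, v_j) = B(v_i, w) = B(w,w)` for all `i < j` and all `i`,
then `M(v_1 + ⋯ + v_r + (2 − r)w) = M(2w) + Σ_i (M(v_i) − M(w))`. -/
theorem quadratic_bifurcation_identity (n r : ℕ)
    (B : LinearMap.BilinForm ℚ (Fin n → ℚ)) (hB : ∀ x y, B x y = B y x)
    (L : (Fin n → ℚ) →ₗ[ℚ] ℚ)
    (M : (Fin n → ℚ) → ℚ) (hM : ∀ S, M S = B S S - L S + 1)
    (v : Fin r → Fin n → ℚ) (w : Fin n → ℚ)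
    (hvv : ∀ i j : Fin r, i < j → B (v i) (v j) = B w w)
    (hvw : ∀ i : Fin r, B (v i) w = B w w) :
    M (∑ i, v i + ((2 : ℚ) - r) • w) = M (2 • w) + ∑ i, (M (v i) - M w) := by
  simpa only [Fintype.card_fin] using
    quadratic_bifurcation_identity_general B.toQuadraticMap L 1 M hM v w
      (pairwise_polar_eq_of_lt fun i j hij ↦ polar_toQuadraticMap_congr hB (hvv i j hij))
      fun i ↦ polar_toQuadraticMap_congr hB (hvw i)
end
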